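/- If a d.c.e. real γ is weakly d.c.e. speedable, then γ is covered by some Solovay test (equivalently: a Martin-Löf random d.c.e. real is not weakly d.c.e. speedable). -/

import Mathlib

open Filter

/-- A computable approximation of a real `α`: a computable sequence of
rationals in `[0,1]` converging to `α`. -/
def IsCompApprox (a : ℕ → ℚ) (α : ℝ) : Prop :=
  Computable a ∧ (∀ s, a s ∈ Set.Icc (0 : ℚ) 1) ∧
    Tendsto (fun s => (a s : ℝ)) atTop (nhds α)

/-- A d.c.e. approximation: a computable approximation with bounded variation. -/
def IsDCEApprox (a : ℕ → ℚ) (α : ℝ) : Prop :=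
  IsCompApprox a α ∧ Summable (fun s => |(a (s + 1) : ℝ) - (a s : ℝ)|)

/-- A computable order: a nondecreasing unbounded computable function. -/
def IsComputableOrder (f : ℕ → ℕ) : Prop :=
  Computable f ∧ Monotone f ∧ Tendsto f atTop atTop

/-- The liminf (in the extended reals) of `|(α - a (f s)) / (α - a s)|`. -/
noncomputable def speedLiminf (a : ℕ → ℚ) (f : ℕ → ℕ) (α : ℝ) : EReal :=
  Filter.liminf (fun s => ((|(α - (a (f s) : ℝ)) / (α - (a s : ℝ))| : ℝ) : EReal)) atTop

/-- A computable approximation `a` of `α` is `ρ`-speedable. -/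
def IsRhoSpeedable (a : ℕ → ℚ) (α : ℝ) (ρ : ℚ) : Prop :=
  (∃ q : ℚ, α = (q : ℝ)) ∨
    ∃ f, IsComputableOrder f ∧ speedLiminf a f α ≤ (((ρ : ℝ) : EReal))

/-- A computable approximation is speedable if it is `ρ`-speedable for some rational
`ρ ∈ [0,1)`. -/
def IsSpeedable (a : ℕ → ℚ) (α : ℝ) : Prop :=
  ∃ ρ : ℚ, 0 ≤ ρ ∧ ρ < 1 ∧ IsRhoSpeedable a α ρ

/-- A Solovay test: computable sequences of rationals `l i ≤ r i` in `[0,1]`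
with `Σ (r i - l i) < ∞`. -/
structure SolovayTest where
  l : ℕ → ℚ
  r : ℕ → ℚ
  comp_l : Computable l
  comp_r : Computable r
  mem_l : ∀ i, l i ∈ Set.Icc (0 : ℚ) 1
  mem_r : ∀ i, r i ∈ Set.Icc (0 : ℚ) 1
  le : ∀ i, l i ≤ r i
  summable : Summable (fun i => (r i : ℝ) - (l i : ℝ))

/-- A real `γ` is covered by a Solovay test if `γ ∈ [l i, r i]` for infinitely many `i`. -/
def SolovayTest.Covers (T : SolovayTest) (γ : ℝ) : Prop :=
  ∃ᶠ i in atTop, γ ∈ Set.Icc (T.l i : ℝ) (T.r i : ℝ)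

/-- The sequence of endpoints `l 0, r 0, l 1, r 1, …` of a Solovay test. -/
def SolovayTest.endpoints (T : SolovayTest) (n : ℕ) : ℚ :=
  if n % 2 = 0 then T.l (n / 2) else T.r (n / 2)

/-!
Speedability gives a rational `σ < 1` such that `|γ - b s| ≤ σ |γ - a s|` for infinitely many `s`.
Extrapolate: `p s = a s - (a s - b s) / (1 - σ)`. For each such `s` the real `γ` lies between `a s`
and `p s`. Suppose that `γ` is random. The intervals between consecutive terms of a computable
sequence of bounded variation form a Solovay test, so each of `a` and `p` eventually stays on one
side of `γ`. Being infinitely often on opposite sides, they eventually always are. But then `γ` lies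
between `a s` and `p s` for almost all `s`, and since `a s - p s → 0`, searching for indices with
gaps at most `2⁻ⁱ` computes a Solovay test covering `γ`.
-/

/-! ### Computability of rational arithmetic -/

section Computability

open Encodable

section Predicates

variable {α β : Type*} [Primcodable α] [Primcodable β]

theorem computablePred_comp {p : β → Prop} (hp : ComputablePred p) {f : α → β}
    (hf : Computable f) : ComputablePred fun x => p (f x) := by
  classical
  exact (hp.decide.comp hf).computablePred

theorem computablePred_and {p q : α → Prop} (hp : ComputablePred p) (hq : ComputablePred q) :
    ComputablePred fun x => p x ∧ q x := by
  classical
  exact ((Primrec.and.to_comp.comp hp.decide hq.decide).of_eq fun x => by simp).computablePred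

theorem computablePred_eq {f g : α → β} (hf : Computable f) (hg : Computable g) :
    ComputablePred fun x => f x = g x :=
  computablePred_comp Primrec.eq.computablePred (hf.pair hg)

theorem computable_ite {p : α → Prop} [DecidablePred p] (hp : ComputablePred p) {f g : α → β}
    (hf : Computable f) (hg : Computable g) : Computable fun x => if p x then f x else g x := by
  simpa [Bool.cond_decide] using hp.decide.cond hf hg

-- Search for the first code of a value that the graph accepts.
theorem computable_of_graph {f : α → β} (hf : ComputablePred fun x : α × β => f x.1 = x.2) :
    Computable f := by
  classical
  have hgraph : ComputablePred fun x : α × ℕ => decode₂ β x.2 = some (f x.1) := by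
    have hcheck := Computable.option_casesOn (Primrec.decode₂.to_comp.comp Computable.snd)
      (Computable.const false) (hf.decide.comp ((Computable.fst.comp .fst).pair .snd)).to₂
    refine (hcheck.of_eq fun x => ?_).computablePred
    cases decode₂ β x.2 <;> simp [eq_comm]
  have hex (x : α) : ∃ n, decode₂ β n = some (f x) := ⟨encode (f x), encodek₂ _⟩
  refine Computable.encode_iff.1 ((Computable.find hgraph hex).of_eq fun x => ?_)
  exact (decode₂_eq_some.1 (Nat.find_spec (hex x))).symm

theorem computable_count {p : ℕ → Prop} [DecidablePred p] (hp : ComputablePred p) :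
    Computable (Nat.count p) := by
  have hstep : Computable₂ fun (_ : ℕ) (x : ℕ × ℕ) => x.2 + if p x.1 then 1 else 0 :=
    Primrec.nat_add.to_comp.comp (Computable.snd.comp .snd) <|
      computable_ite (computablePred_comp hp (Computable.fst.comp .snd)) (.const 1) (.const 0)
  refine (Computable.nat_rec .id (.const 0) hstep).of_eq fun n => ?_
  induction n with
  | zero => simp
  | succ n ih => rw [Nat.count_succ, ← ih]; rfl

end Predicates

section Infinite

variable {α : Type*} [enc : Encodable α] [Infinite α]

theorem encode_ofEncodableOfInfinite [DecidablePred (· ∈ Set.range enc.encode)] (a : α) :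
    (Denumerable.ofEncodableOfInfinite α).encode a =
      Nat.count (· ∈ Set.range enc.encode) (enc.encode a) := by
  unfold Nat.count
  change List.countP _ _ = _
  congr!

theorem computable_encode_of_infinite (henc : ComputablePred (· ∈ Set.range enc.encode)) :
    @Computable α ℕ (@Primcodable.ofDenumerable α (Denumerable.ofEncodableOfInfinite α)) _
      enc.encode := by
  classical
  let _ : Primcodable α := @Primcodable.ofDenumerable α (Denumerable.ofEncodableOfInfinite α)
  have hgraph : ComputablePred fun x : α × ℕ =>
      x.2 ∈ Set.range enc.encode ∧ Nat.count (· ∈ Set.range enc.encode) x.2 =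
        (Denumerable.ofEncodableOfInfinite α).encode x.1 :=
    computablePred_and (computablePred_comp henc .snd)
      (computablePred_eq ((computable_count henc).comp .snd) (Computable.encode.comp .fst))
  refine computable_of_graph (hgraph.of_eq fun ⟨a, n⟩ => ?_)
  simp only [encode_ofEncodableOfInfinite]
  constructor
  · rintro ⟨hn, hcount⟩
    exact (Nat.count_injective hn ⟨a, rfl⟩ hcount).symm
  · rintro rfl
    exact ⟨⟨a, rfl⟩, rfl⟩

end Infinite

theorem primrec₂_gcd : Primrec₂ Nat.gcd := by
  have hdvd : PrimrecRel fun (x : ℕ × ℕ) (k : ℕ) => k ∣ x.1 ∧ k ∣ x.2 := by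
    simp only [Nat.dvd_iff_mod_eq_zero]
    exact (Primrec.eq.comp (Primrec.nat_mod.comp (Primrec.fst.comp .fst) .snd) (.const 0)).and
      (Primrec.eq.comp (Primrec.nat_mod.comp (Primrec.snd.comp .fst) .snd) (.const 0))
  refine (Primrec.nat_findGreatest (Primrec.nat_add.comp .fst .snd) hdvd).of_eq fun ⟨m, n⟩ => ?_
  dsimp only
  refine Nat.findGreatest_eq_iff.2 ⟨?_, fun _ => ⟨Nat.gcd_dvd_left m n, Nat.gcd_dvd_right m n⟩, ?_⟩
  · rcases m.eq_zero_or_pos with rfl | hm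
    · simp
    · exact (Nat.gcd_le_left n hm).trans (Nat.le_add_right m n)
  · rintro k hlt hle ⟨hkm, hkn⟩
    have hgcd : m.gcd n = 0 := Nat.eq_zero_of_dvd_of_lt (Nat.dvd_gcd hkm hkn) hlt
    obtain ⟨rfl, rfl⟩ := Nat.gcd_eq_zero_iff.1 hgcd
    lia

section Int

theorem primrec_intEquivNatSumNat : Primrec Equiv.intEquivNatSumNat :=
  Primrec.encode_iff.1 (Primrec.encode.of_eq fun z => by cases z <;> rfl)

theorem primrec_int_natCast : Primrec (Nat.cast : ℕ → ℤ) :=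
  Primrec.encode_iff.1 (Primrec.nat_double.of_eq fun _ => rfl)

theorem primrec_int_negSucc : Primrec Int.negSucc :=
  Primrec.encode_iff.1 (Primrec.nat_double_succ.of_eq fun _ => rfl)

theorem primrec_int_toNat : Primrec Int.toNat :=
  (Primrec.sumCasesOn primrec_intEquivNatSumNat Primrec₂.right (Primrec₂.const 0)).of_eq
    fun z => by cases z <;> rfl

theorem primrec_int_toNat_neg : Primrec fun z : ℤ => (-z).toNat :=
  (Primrec.sumCasesOn primrec_intEquivNatSumNat (Primrec₂.const 0)
    (Primrec.succ.comp₂ Primrec₂.right)).of_eq fun z => by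
      cases z with
      | ofNat n => exact (Int.toNat_neg_natCast n).symm
      | negSucc n => rfl

theorem primrec_int_natAbs : Primrec Int.natAbs :=
  (Primrec.nat_add.comp primrec_int_toNat primrec_int_toNat_neg).of_eq fun z => by lia

theorem primrec₂_natCast_sub_natCast : Primrec₂ fun m n : ℕ => (m : ℤ) - n := by
  have hpos : Primrec₂ fun m n : ℕ => ((m - n : ℕ) : ℤ) :=
    primrec_int_natCast.comp₂ Primrec.nat_sub
  have hneg : Primrec₂ fun m n : ℕ => Int.negSucc (n - m).pred :=
    primrec_int_negSucc.comp₂ <|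
      Primrec.pred.comp₂ (Primrec.nat_sub.comp₂ Primrec₂.right Primrec₂.left)
  refine (Primrec.ite (Primrec.nat_le.comp .snd .fst) hpos hneg).of_eq fun ⟨m, n⟩ => ?_
  dsimp only [Nat.pred_eq_sub_one]
  split_ifs <;> lia

theorem primrec₂_int_sub : Primrec₂ ((· - ·) : ℤ → ℤ → ℤ) := by
  refine (primrec₂_natCast_sub_natCast.comp
    (Primrec.nat_add.comp (primrec_int_toNat.comp .fst) (primrec_int_toNat_neg.comp .snd))
    (Primrec.nat_add.comp (primrec_int_toNat_neg.comp .fst) (primrec_int_toNat.comp .snd))).of_eq ?_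
  intro x
  lia

theorem primrec₂_int_mul : Primrec₂ ((· * ·) : ℤ → ℤ → ℤ) := by
  have hpos := primrec_int_toNat.comp (Primrec.fst (α := ℤ) (β := ℤ))
  have hneg := primrec_int_toNat_neg.comp (Primrec.fst (α := ℤ) (β := ℤ))
  have hpos' := primrec_int_toNat.comp (Primrec.snd (α := ℤ) (β := ℤ))
  have hneg' := primrec_int_toNat_neg.comp (Primrec.snd (α := ℤ) (β := ℤ))
  refine (primrec₂_natCast_sub_natCast.comp
    (Primrec.nat_add.comp (Primrec.nat_mul.comp hpos hpos') (Primrec.nat_mul.comp hneg hneg'))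
    (Primrec.nat_add.comp (Primrec.nat_mul.comp hpos hneg')
      (Primrec.nat_mul.comp hneg hpos'))).of_eq fun ⟨a, b⟩ => ?_
  push_cast
  conv_rhs => rw [← a.toNat_sub_toNat_neg, ← b.toNat_sub_toNat_neg]
  ring

theorem primrecRel_int_le : PrimrecRel ((· ≤ ·) : ℤ → ℤ → Prop) :=
  (Primrec.eq.comp (primrec_int_toNat.comp primrec₂_int_sub) (.const 0)).of_eq fun x => by
    simp

end Int

section Rat

/-- The code of a reduced fraction under `Rat.instEncodable`. The codes do not exhaust `ℕ`, and the
`Denumerable ℚ` instance that defines computability on `ℚ` is their order-preserving renumbering. -/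
def ratCode (q : ℚ) : ℕ := Nat.pair (encode q.num) q.den

theorem mem_range_ratCode {n : ℕ} :
    n ∈ Set.range ratCode ↔
      (Denumerable.ofNat ℤ n.unpair.1).natAbs.gcd n.unpair.2 = 1 ∧ n.unpair.2 ≠ 0 := by
  constructor
  · rintro ⟨q, rfl⟩
    simp only [ratCode, Nat.unpair_pair, Denumerable.ofNat_encode]
    exact ⟨q.reduced, q.den_nz⟩
  · rintro ⟨hcoprime, hden⟩
    exact ⟨⟨_, _, hden, hcoprime⟩, by
      simp only [ratCode, Denumerable.encode_ofNat, Nat.pair_unpair]⟩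

theorem computable_ratCode : Computable ratCode := by
  have hnum : Primrec fun n : ℕ => (Denumerable.ofNat ℤ n.unpair.1).natAbs :=
    primrec_int_natAbs.comp ((Primrec.ofNat ℤ).comp (Primrec.fst.comp .unpair))
  have hden : Primrec fun n : ℕ => n.unpair.2 := Primrec.snd.comp .unpair
  have hrange : PrimrecPred (· ∈ Set.range ratCode) :=
    ((Primrec.eq.comp (primrec₂_gcd.comp hnum hden) (.const 1)).and
      (Primrec.eq.comp hden (.const 0)).not).of_eq fun _ => mem_range_ratCode.symm
  exact computable_encode_of_infinite (enc := Rat.instEncodable) hrange.computablePred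

theorem computable_rat_num : Computable Rat.num :=
  ((Primrec.ofNat ℤ).comp (Primrec.fst.comp .unpair)).to_comp.comp computable_ratCode |>.of_eq
    fun q => by simp only [ratCode, Nat.unpair_pair, Denumerable.ofNat_encode]

theorem computable_rat_den : Computable Rat.den :=
  (Primrec.snd.comp Primrec.unpair).to_comp.comp computable_ratCode |>.of_eq
    fun q => by simp [ratCode]

theorem mkRat_eq_iff_mul_eq_mul {z : ℤ} {d : ℕ} (hd : d ≠ 0) {q : ℚ} :
    mkRat z d = q ↔ z * q.den = q.num * d := by
  conv_lhs => rw [← q.mkRat_self]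
  exact Rat.mkRat_eq_iff hd q.den_nz

variable {α : Type*} [Primcodable α] {f g : α → ℚ}

theorem computable_mkRat {z : α → ℤ} {d : α → ℕ} (hz : Computable z) (hd : Computable d)
    (hd₀ : ∀ x, d x ≠ 0) : Computable fun x => mkRat (z x) (d x) := by
  have mul := primrec₂_int_mul.to_comp
  have natCast := primrec_int_natCast.to_comp
  have hgraph : ComputablePred fun x : α × ℚ => z x.1 * x.2.den = x.2.num * d x.1 :=
    computablePred_eq
      (mul.comp (hz.comp .fst) (natCast.comp (computable_rat_den.comp .snd)))
      (mul.comp (computable_rat_num.comp .snd) (natCast.comp (hd.comp .fst)))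
  exact computable_of_graph (hgraph.of_eq fun x => (mkRat_eq_iff_mul_eq_mul (hd₀ x.1)).symm)

theorem computable_num_mul_den (hf : Computable f) (hg : Computable g) :
    Computable fun x => (f x).num * (g x).den :=
  primrec₂_int_mul.to_comp.comp (computable_rat_num.comp hf)
    (primrec_int_natCast.to_comp.comp (computable_rat_den.comp hg))

theorem computable_den_mul_den (hf : Computable f) (hg : Computable g) :
    Computable fun x => (f x).den * (g x).den :=
  Primrec.nat_mul.to_comp.comp (computable_rat_den.comp hf) (computable_rat_den.comp hg)

theorem computable_rat_sub (hf : Computable f) (hg : Computable g) :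
    Computable fun x => f x - g x := by
  simp only [Rat.sub_def']
  exact computable_mkRat
    (primrec₂_int_sub.to_comp.comp (computable_num_mul_den hf hg) (computable_num_mul_den hg hf))
    (computable_den_mul_den hf hg) fun _ => mul_ne_zero (Rat.den_nz _) (Rat.den_nz _)

theorem computable_rat_mul (hf : Computable f) (hg : Computable g) :
    Computable fun x => f x * g x := by
  simp only [Rat.mul_def']
  exact computable_mkRat
    (primrec₂_int_mul.to_comp.comp (computable_rat_num.comp hf) (computable_rat_num.comp hg))
    (computable_den_mul_den hf hg) fun _ => mul_ne_zero (Rat.den_nz _) (Rat.den_nz _)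

theorem computablePred_rat_le (hf : Computable f) (hg : Computable g) :
    ComputablePred fun x => f x ≤ g x := by
  simp only [Rat.le_iff]
  exact computablePred_comp primrecRel_int_le.computablePred
    ((computable_num_mul_den hf hg).pair (computable_num_mul_den hg hf))

theorem computable_rat_max (hf : Computable f) (hg : Computable g) :
    Computable fun x => max (f x) (g x) := by
  simp only [max_def]
  exact computable_ite (computablePred_rat_le hf hg) hg hf

theorem computable_rat_min (hf : Computable f) (hg : Computable g) :
    Computable fun x => min (f x) (g x) := by
  simp only [min_def]
  exact computable_ite (computablePred_rat_le hf hg) hf hg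

theorem computable_rat_abs (hf : Computable f) : Computable fun x => |f x| := by
  simp only [abs_eq_max_neg, neg_eq_zero_sub]
  exact computable_rat_max hf (computable_rat_sub (.const 0) hf)

theorem computable_rat_pow (q : ℚ) : Computable fun n : ℕ => q ^ n := by
  have hstep : Computable₂ fun (_ : ℕ) (x : ℕ × ℚ) => x.2 * q :=
    computable_rat_mul (Computable.snd.comp .snd) (.const q)
  refine (Computable.nat_rec .id (.const 1) hstep).of_eq fun n => ?_
  induction n with
  | zero => simp
  | succ n ih => rw [pow_succ, ← ih]; rfl

end Rat

end Computability

/-! ### Computable sequences and Solovay tests -/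

/-- Martin-Löf randomness in terms of Solovay tests. As tests live in `[0,1]`, reals outside `[0,1]`
satisfy it vacuously. -/
def IsSolovayRandom (γ : ℝ) : Prop :=
  ∀ T : SolovayTest, ¬ T.Covers γ

/-- A computable sequence of rationals of bounded variation. Unlike a d.c.e. approximation it may
leave `[0,1]`, so that such sequences form a vector space over `ℚ`. -/
structure IsComputableBV (x : ℕ → ℚ) : Prop where
  computable : Computable x
  summable : Summable fun s => |(x (s + 1) : ℝ) - x s|

theorem IsDCEApprox.isComputableBV {a : ℕ → ℚ} {α : ℝ} (ha : IsDCEApprox a α) :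
    IsComputableBV a :=
  ⟨ha.1.1, ha.2⟩

theorem IsDCEApprox.tendsto {a : ℕ → ℚ} {α : ℝ} (ha : IsDCEApprox a α) :
    Tendsto (fun s => (a s : ℝ)) atTop (nhds α) :=
  ha.1.2.2

namespace IsComputableBV

variable {x y : ℕ → ℚ}

theorem sub (hx : IsComputableBV x) (hy : IsComputableBV y) :
    IsComputableBV fun s => x s - y s where
  computable := computable_rat_sub hx.computable hy.computable
  summable := by
    refine (hx.summable.add hy.summable).of_nonneg_of_le (fun _ => abs_nonneg _) fun s => ?_
    push_cast
    rw [sub_sub_sub_comm]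
    exact abs_sub _ _

theorem const_mul (k : ℚ) (hx : IsComputableBV x) : IsComputableBV fun s => k * x s where
  computable := computable_rat_mul (.const k) hx.computable
  summable := (hx.summable.mul_left |(k : ℝ)|).congr fun s => by
    push_cast
    rw [← abs_mul, mul_sub]

end IsComputableBV

section Order

variable {α : Type*} [LinearOrder α] {u : ℕ → α} {c : α}

theorem eventually_lt_of_notMem_uIcc_succ {N : ℕ}
    (h : ∀ n ≥ N, c ∉ Set.uIcc (u n) (u (n + 1))) (hN : u N < c) : ∀ᶠ n in atTop, u n < c := by
  refine eventually_atTop.2 ⟨N, fun n hn => ?_⟩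
  induction n, hn using Nat.le_induction with
  | base => exact hN
  | succ n hn ih => exact lt_of_not_ge fun hc => h n hn (Set.mem_uIcc_of_le ih.le hc)

theorem eventually_lt_or_eventually_gt_of_notMem_uIcc_succ
    (h : ∀ᶠ n in atTop, c ∉ Set.uIcc (u n) (u (n + 1))) :
    (∀ᶠ n in atTop, u n < c) ∨ ∀ᶠ n in atTop, c < u n := by
  obtain ⟨N, hN⟩ := eventually_atTop.1 h
  have hne : u N ≠ c := fun hc => hN N le_rfl (hc ▸ Set.left_mem_uIcc)
  refine hne.lt_or_gt.imp (eventually_lt_of_notMem_uIcc_succ hN) fun hlt => ?_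
  exact eventually_lt_of_notMem_uIcc_succ (α := αᵒᵈ) (c := OrderDual.toDual c)
    (u := OrderDual.toDual ∘ u) (fun n hn => by
      simpa [Set.uIcc, and_comm] using hN n hn) hlt

end Order

/-- The nearest point of `[0,1]`; it brings the endpoints of an interval into the range allowed
for a Solovay test without losing any point of `[0,1]`. -/
def clampUnit (q : ℚ) : ℚ :=
  max (min q 1) 0

theorem clampUnit_mem_Icc (q : ℚ) : clampUnit q ∈ Set.Icc (0 : ℚ) 1 :=
  ⟨le_max_right _ _, max_le (min_le_right _ _) zero_le_one⟩

theorem clampUnit_mono : Monotone clampUnit := fun _ _ h =>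
  max_le_max_right _ (min_le_min_right _ h)

theorem abs_clampUnit_sub_le (p q : ℚ) : |clampUnit p - clampUnit q| ≤ |p - q| :=
  (abs_max_sub_max_le_abs _ _ _).trans <| by
    simpa using abs_min_sub_min_le_max p 1 q 1

theorem computable_clampUnit {α : Type*} [Primcodable α] {f : α → ℚ} (hf : Computable f) :
    Computable fun i => clampUnit (f i) :=
  computable_rat_max (computable_rat_min hf (.const 1)) (.const 0)

theorem mem_Icc_clampUnit {γ : ℝ} (hγ : γ ∈ Set.Icc (0 : ℝ) 1) {p q : ℚ}
    (h : γ ∈ Set.Icc (p : ℝ) q) : γ ∈ Set.Icc (clampUnit p : ℝ) (clampUnit q) := by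
  simp only [clampUnit, Rat.cast_max, Rat.cast_min, Rat.cast_zero, Rat.cast_one]
  exact ⟨max_le (min_le_of_left_le h.1) hγ.1, le_max_of_le_left (le_min h.2 hγ.2)⟩

/-- The Solovay test formed by the intervals with endpoints `x i` and `y i`, cut off to `[0,1]`. -/
def SolovayTest.ofEndpoints (x y : ℕ → ℚ) (hx : Computable x) (hy : Computable y)
    (hxy : Summable fun i => |(x i : ℝ) - y i|) : SolovayTest where
  l i := clampUnit (min (x i) (y i))
  r i := clampUnit (max (x i) (y i))
  comp_l := computable_clampUnit (computable_rat_min hx hy)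
  comp_r := computable_clampUnit (computable_rat_max hx hy)
  mem_l _ := clampUnit_mem_Icc _
  mem_r _ := clampUnit_mem_Icc _
  le _ := clampUnit_mono min_le_max
  summable := by
    refine hxy.of_nonneg_of_le (fun i => ?_) fun i => ?_
    · exact sub_nonneg.2 (Rat.cast_le.2 (clampUnit_mono min_le_max))
    · have h := (le_abs_self _).trans (abs_clampUnit_sub_le (max (x i) (y i)) (min (x i) (y i)))
      rw [max_sub_min_eq_abs, abs_abs, abs_sub_comm] at h
      exact_mod_cast h

theorem exists_computable_subseq_abs_le {x : ℕ → ℚ} (hx : Computable x)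
    (hlim : Tendsto (fun s => (x s : ℝ)) atTop (nhds 0)) :
    ∃ k : ℕ → ℕ, Computable k ∧ ∀ i, i ≤ k i ∧ |(x (k i) : ℝ)| ≤ (1 / 2) ^ i := by
  let P (i n : ℕ) : Prop := i ≤ n ∧ |x n| ≤ (1 / 2 : ℚ) ^ i
  have hP : ComputablePred fun p : ℕ × ℕ => P p.1 p.2 :=
    computablePred_and (computablePred_comp Primrec.nat_le.computablePred .id)
      (computablePred_rat_le (computable_rat_abs (hx.comp .snd))
        ((computable_rat_pow (1 / 2)).comp .fst))
  have hcast (n i : ℕ) : |(x n : ℝ)| ≤ (1 / 2) ^ i ↔ |x n| ≤ (1 / 2 : ℚ) ^ i := by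
    rw [← Rat.cast_le (K := ℝ)]
    push_cast
    rfl
  have hex (i : ℕ) : ∃ n, P i n := by
    have hsmall : ∀ᶠ n in atTop, |(x n : ℝ)| < (1 / 2 : ℝ) ^ i :=
      hlim.abs.eventually_lt_const (by simp)
    obtain ⟨n, hn, hin⟩ := (hsmall.and (eventually_ge_atTop i)).exists
    exact ⟨n, hin, hcast n i |>.1 hn.le⟩
  exact ⟨_, Computable.find hP hex, fun i =>
    (Nat.find_spec (hex i)).imp_right (hcast _ i).2⟩

namespace IsSolovayRandom

variable {γ : ℝ} {x y : ℕ → ℚ}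

theorem eventually_notMem_uIcc_of_summable (hrand : IsSolovayRandom γ)
    (hγ : γ ∈ Set.Icc (0 : ℝ) 1) (hx : Computable x) (hy : Computable y)
    (hxy : Summable fun i => |(x i : ℝ) - y i|) :
    ∀ᶠ i in atTop, γ ∉ Set.uIcc (x i : ℝ) (y i) := by
  refine (not_frequently.1 (hrand (.ofEndpoints x y hx hy hxy))).mono fun i hi hmem => hi ?_
  refine mem_Icc_clampUnit hγ ?_
  push_cast
  exact hmem

theorem eventually_lt_or_eventually_gt (hrand : IsSolovayRandom γ) (hγ : γ ∈ Set.Icc (0 : ℝ) 1)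
    (hx : IsComputableBV x) :
    (∀ᶠ s in atTop, (x s : ℝ) < γ) ∨ ∀ᶠ s in atTop, γ < x s :=
  eventually_lt_or_eventually_gt_of_notMem_uIcc_succ <|
    hrand.eventually_notMem_uIcc_of_summable hγ hx.computable (hx.computable.comp .succ)
      (by simpa only [abs_sub_comm] using hx.summable)

theorem frequently_notMem_uIcc_of_tendsto (hrand : IsSolovayRandom γ)
    (hγ : γ ∈ Set.Icc (0 : ℝ) 1) (hx : Computable x) (hy : Computable y)
    (hxy : Tendsto (fun s => (x s : ℝ) - y s) atTop (nhds 0)) :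
    ∃ᶠ s in atTop, γ ∉ Set.uIcc (x s : ℝ) (y s) := by
  obtain ⟨k, hk, hle⟩ := exists_computable_subseq_abs_le (computable_rat_sub hx hy)
    (by simpa only [Rat.cast_sub] using hxy)
  have hsummable : Summable fun i => |(x (k i) : ℝ) - y (k i)| :=
    summable_geometric_two.of_nonneg_of_le (fun _ => abs_nonneg _) fun i => by
      simpa only [Rat.cast_sub] using (hle i).2
  have hk_tendsto : Tendsto k atTop atTop := tendsto_atTop_mono (fun i => (hle i).1) tendsto_id
  exact hk_tendsto.frequently
    (hrand.eventually_notMem_uIcc_of_summable hγ (hx.comp hk) (hy.comp hk) hsummable).frequently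

theorem eventually_notMem_uIcc_of_tendsto (hrand : IsSolovayRandom γ)
    (hγ : γ ∈ Set.Icc (0 : ℝ) 1) (hx : IsComputableBV x) (hy : IsComputableBV y)
    (hxy : Tendsto (fun s => (x s : ℝ) - y s) atTop (nhds 0)) :
    ∀ᶠ s in atTop, γ ∉ Set.uIcc (x s : ℝ) (y s) := by
  have hnot : ¬ ∀ᶠ s in atTop, γ ∈ Set.uIcc (x s : ℝ) (y s) := by
    simpa only [not_eventually] using
      hrand.frequently_notMem_uIcc_of_tendsto hγ hx.computable hy.computable hxy
  rcases hrand.eventually_lt_or_eventually_gt hγ hx with hx_lt | hx_gt <;>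
    rcases hrand.eventually_lt_or_eventually_gt hγ hy with hy_lt | hy_gt
  · filter_upwards [hx_lt, hy_lt] with s hxs hys using Set.notMem_uIcc_of_gt hxs hys
  · exact absurd (hx_lt.mp (hy_gt.mono fun s hys hxs => Set.mem_uIcc_of_le hxs.le hys.le)) hnot
  · exact absurd (hx_gt.mp (hy_lt.mono fun s hys hxs => Set.mem_uIcc_of_ge hys.le hxs.le)) hnot
  · filter_upwards [hx_gt, hy_gt] with s hxs hys using Set.notMem_uIcc_of_lt hxs hys

end IsSolovayRandom

theorem mem_uIcc_of_abs_sub_le {K : Type*} [Field K] [LinearOrder K] [IsStrictOrderedRing K]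
    {a b c ρ : K} (hρ : ρ < 1) (h : |c - b| ≤ ρ * |c - a|) :
    c ∈ Set.uIcc a (a - (1 - ρ)⁻¹ * (a - b)) := by
  have hpos : 0 < 1 - ρ := sub_pos.2 hρ
  rw [Set.mem_uIcc, inv_mul_eq_div, le_sub_comm, sub_le_comm, le_div_iff₀ hpos, div_le_iff₀ hpos]
  rcases le_total a c with hac | hca
  · rw [abs_of_nonneg (sub_nonneg.2 hac)] at h
    exact .inl ⟨hac, by linarith [le_abs_self (c - b)]⟩
  · rw [abs_of_nonpos (sub_nonpos.2 hca)] at h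
    exact .inr ⟨by linarith [neg_abs_le (c - b)], hca⟩

theorem frequently_abs_sub_le_of_liminf_lt {ι : Type*} {l : Filter ι} {a b : ι → ℝ} {γ ρ : ℝ}
    (hne : ∀ᶠ s in l, a s ≠ γ)
    (hlim : liminf (fun s => ((|(γ - b s) / (γ - a s)| : ℝ) : EReal)) l < ρ) :
    ∃ᶠ s in l, |γ - b s| ≤ ρ * |γ - a s| := by
  refine ((frequently_lt_of_liminf_lt (by isBoundedDefault) hlim).and_eventually hne).mono ?_
  rintro s ⟨hlt, hs⟩
  rw [EReal.coe_lt_coe_iff, abs_div, div_lt_iff₀ (abs_pos.2 (sub_ne_zero.2 hs.symm))] at hlt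
  exact hlt.le

theorem weakly_dce_speedable_implies_nonrandom (γ : ℝ) (hγ : γ ∈ Set.Ioo (0 : ℝ) 1)
    (hdce : ∃ a : ℕ → ℚ, IsDCEApprox a γ)
    (hweak : ∃ ρ : ℚ, 0 < ρ ∧ ρ < 1 ∧
      ∃ a b : ℕ → ℚ, IsDCEApprox a γ ∧ IsDCEApprox b γ ∧
        Filter.liminf (fun s => ((|(γ - (b s : ℝ)) / (γ - (a s : ℝ))| : ℝ) : EReal)) atTop
          ≤ (((ρ : ℝ) : EReal))) :
    ∃ T : SolovayTest, T.Covers γ := by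
  obtain ⟨ρ, -, hρ, a, b, ha, hb, hlim⟩ := hweak
  by_contra hcover
  have hrand : IsSolovayRandom γ := not_exists.1 hcover
  have hγ' := Set.Ioo_subset_Icc_self hγ
  obtain ⟨σ, hρσ, hσ⟩ := exists_between hρ
  have hne : ∀ᶠ s in atTop, (a s : ℝ) ≠ γ :=
    (hrand.eventually_lt_or_eventually_gt hγ' ha.isComputableBV).elim
      (fun h => h.mono fun _ => ne_of_lt) fun h => h.mono fun _ => ne_of_gt
  have hclose : ∃ᶠ s in atTop, |γ - b s| ≤ σ * |γ - a s| :=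
    frequently_abs_sub_le_of_liminf_lt hne (hlim.trans_lt (by exact_mod_cast hρσ))
  let p (s : ℕ) : ℚ := a s - (1 - σ)⁻¹ * (a s - b s)
  have hp : IsComputableBV p :=
    ha.isComputableBV.sub ((ha.isComputableBV.sub hb.isComputableBV).const_mul _)
  have hap : Tendsto (fun s => (a s : ℝ) - p s) atTop (nhds 0) := by
    simpa [p] using (ha.tendsto.sub hb.tendsto).const_mul ((1 - σ : ℝ)⁻¹)
  have hmem : ∃ᶠ s in atTop, γ ∈ Set.uIcc (a s : ℝ) (p s) := hclose.mono fun s hs => by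
    simpa [p] using mem_uIcc_of_abs_sub_le (by exact_mod_cast hσ) hs
  exact hmem (hrand.eventually_notMem_uIcc_of_tendsto hγ' ha.isComputableBV hp hap)
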